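/- Every length-three reflection factorization of a Coxeter element of G4 has, in its Hurwitz orbit, a factorization with two consecutive equal entries (i.e., a factorization (s₁,s₂,s₃) with s_i = s_{i+1} for some i). -/

import Mathlib

noncomputable section

open Matrix Complex

/-- The `i`-th Hurwitz move on length-`k` tuples of group elements. -/
def IsHurwitzMove {G : Type*} [Group G] {k : ℕ} (t t' : Fin k → G) : Prop :=
  ∃ i : ℕ, ∃ h : i + 1 < k,
    t' ⟨i, Nat.lt_of_succ_lt h⟩ = t ⟨i + 1, h⟩ ∧
    t' ⟨i + 1, h⟩ = (t ⟨i + 1, h⟩)⁻¹ * t ⟨i, Nat.lt_of_succ_lt h⟩ * t ⟨i + 1, h⟩ ∧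
    ∀ j : Fin k, (j : ℕ) ≠ i → (j : ℕ) ≠ i + 1 → t' j = t j

/-- Two tuples lie in the same Hurwitz orbit. -/
def SameHurwitzOrbit {G : Type*} [Group G] {k : ℕ} (t t' : Fin k → G) : Prop :=
  Relation.EqvGen IsHurwitzMove t t'

/-- A group element `r` appears (as an entry) in the Hurwitz orbit of the tuple `t`. -/
def Appears {G : Type*} [Group G] {k : ℕ} (r : G) (t : Fin k → G) : Prop :=
  ∃ s : Fin k → G, SameHurwitzOrbit t s ∧ ∃ j, s j = r

/-- A tuple has two consecutive equal entries. -/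
def HasConsecutiveEqualPair {G : Type*} [Group G] {k : ℕ} (t : Fin k → G) : Prop :=
  ∃ i : ℕ, ∃ h : i + 1 < k, t ⟨i, Nat.lt_of_succ_lt h⟩ = t ⟨i + 1, h⟩

/-- Replace the `p`-th entry of a tuple by two consecutive copies of its square. -/
def doubleAt {G : Type*} [Group G] {m : ℕ} (t : Fin m → G) (p : Fin m) : Fin (m + 1) → G :=
  fun j =>
    if h1 : (j : ℕ) < (p : ℕ) then t ⟨j, h1.trans p.isLt⟩
    else if h2 : (j : ℕ) ≤ (p : ℕ) + 1 then (t p) ^ 2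
    else t ⟨(j : ℕ) - 1, by have := j.isLt; omega⟩

/-- `ω = e^(2πi/3)`. -/
def ω : ℂ := Complex.exp (2 * Real.pi * Complex.I / 3)

def AMat : Matrix (Fin 2) (Fin 2) ℂ := !![1, 0; 0, ω]

def BMat : Matrix (Fin 2) (Fin 2) ℂ :=
  !![(ω - ω ^ 2) / 3, ω ^ 2; (-2 * ω ^ 2) / 3, (-ω - 2 * ω ^ 2) / 3]

/-- The complex reflection group G₄ as the subgroup of GL(2,ℂ) generated by `AMat`, `BMat`. -/
def G4 : Subgroup (GL (Fin 2) ℂ) :=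
  Subgroup.closure {g : GL (Fin 2) ℂ |
    (g : Matrix (Fin 2) (Fin 2) ℂ) = AMat ∨ (g : Matrix (Fin 2) (Fin 2) ℂ) = BMat}

/-- The matrix underlying an element of G₄. -/
def mat (t : G4) : Matrix (Fin 2) (Fin 2) ℂ := ((t : GL (Fin 2) ℂ) : Matrix (Fin 2) (Fin 2) ℂ)

/-- A reflection in G₄: a non-identity element with eigenvalue 1. -/
def IsReflection (t : G4) : Prop := t ≠ 1 ∧ (mat t - 1).det = 0

/-- The conjugacy class R₁ of reflections of determinant ω. -/
def R1 : Set G4 := {t | IsReflection t ∧ (mat t).det = ω}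

/-- The conjugacy class R₂ of reflections of determinant ω². -/
def R2 : Set G4 := {t | IsReflection t ∧ (mat t).det = ω ^ 2}

/-- A Coxeter element of G₄: an element with a primitive 6th root of unity as eigenvalue. -/
def IsCoxeter (c : G4) : Prop :=
  ∃ ζ : ℂ, IsPrimitiveRoot ζ 6 ∧ (mat c - ζ • (1 : Matrix (Fin 2) (Fin 2) ℂ)).det = 0

/-- The relators of G₅: a³, b³, abab(baba)⁻¹. -/
def g5Rels : Set (FreeGroup (Fin 2)) :=
  {FreeGroup.of 0 ^ 3, FreeGroup.of 1 ^ 3,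
    FreeGroup.of 0 * FreeGroup.of 1 * FreeGroup.of 0 * FreeGroup.of 1 *
      (FreeGroup.of 1 * FreeGroup.of 0 * FreeGroup.of 1 * FreeGroup.of 0)⁻¹}

/-- The complex reflection group G₅, by its presentation ⟨a,b | a³ = b³ = 1, abab = baba⟩. -/
abbrev G5 := PresentedGroup g5Rels

def ga : G5 := PresentedGroup.of 0
def gb : G5 := PresentedGroup.of 1

/-- The conjugacy class of `a` in G₅. -/
def S1 : Set G5 := {t | IsConj ga t}
/-- The conjugacy class of `b` in G₅. -/
def S2 : Set G5 := {t | IsConj gb t}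
/-- The conjugacy class of `a²` in G₅. -/
def S3 : Set G5 := {t | IsConj (ga ^ 2) t}
/-- The conjugacy class of `b²` in G₅. -/
def S4 : Set G5 := {t | IsConj (gb ^ 2) t}

/-- A reflection in G₅: a conjugate of a, b, a², or b². -/
def IsReflection5 (t : G5) : Prop := t ∈ S1 ∨ t ∈ S2 ∨ t ∈ S3 ∨ t ∈ S4

/-- A Coxeter element of G₅: an element of order 12. -/
def IsCoxeter5 (c : G5) : Prop := orderOf c = 12

/-- Integral model: 2x2 matrices over the Eisenstein integers, entries `a + b ω`. -/
@[ext] structure EM where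
  a : ℤ
  a' : ℤ
  b : ℤ
  b' : ℤ
  c : ℤ
  c' : ℤ
  d : ℤ
  d' : ℤ
deriving DecidableEq

def EM.one : EM := ⟨1, 0, 0, 0, 0, 0, 1, 0⟩

def EM.mul (x y : EM) : EM where
  a := x.a * y.a - x.a' * y.a' + (x.b * y.c - x.b' * y.c')
  a' := x.a * y.a' + x.a' * y.a - x.a' * y.a' + (x.b * y.c' + x.b' * y.c - x.b' * y.c')
  b := x.a * y.b - x.a' * y.b' + (x.b * y.d - x.b' * y.d')
  b' := x.a * y.b' + x.a' * y.b - x.a' * y.b' + (x.b * y.d' + x.b' * y.d - x.b' * y.d')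
  c := x.c * y.a - x.c' * y.a' + (x.d * y.c - x.d' * y.c')
  c' := x.c * y.a' + x.c' * y.a - x.c' * y.a' + (x.d * y.c' + x.d' * y.c - x.d' * y.c')
  d := x.c * y.b - x.c' * y.b' + (x.d * y.d - x.d' * y.d')
  d' := x.c * y.b' + x.c' * y.b - x.c' * y.b' + (x.d * y.d' + x.d' * y.d - x.d' * y.d')

/-- `det (x - (k + l ω))` vanishes. -/
def EM.ev (x : EM) (k l : ℤ) : Bool :=
  decide ((x.a - k) * (x.d - k) - (x.a' - l) * (x.d' - l) - (x.b * x.c - x.b' * x.c') = 0) &&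
  decide ((x.a - k) * (x.d' - l) + (x.a' - l) * (x.d - k) - (x.a' - l) * (x.d' - l)
    - (x.b * x.c' + x.b' * x.c - x.b' * x.c') = 0)

def EL : List EM := [
  ⟨1, 0, 0, 0, 0, 0, 1, 0⟩,
  ⟨0, 1, 1, 0, 0, 0, 1, 0⟩,
  ⟨1, 0, 0, 0, 0, -1, 0, 1⟩,
  ⟨-1, -1, 1, 1, 0, 0, 1, 0⟩,
  ⟨0, 0, 0, 1, 0, -1, 0, 1⟩,
  ⟨0, 1, 1, 0, 1, 1, 0, 0⟩,
  ⟨1, 0, 0, 0, 1, 0, -1, -1⟩,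
  ⟨0, -1, -1, 0, 0, -1, 0, 1⟩,
  ⟨0, 0, 0, 1, 1, 1, 0, 0⟩,
  ⟨1, 1, -1, -1, 1, 0, -1, -1⟩,
  ⟨-1, -1, 1, 1, -1, 0, 1, 1⟩,
  ⟨0, 1, 1, 0, 0, 1, 0, -1⟩,
  ⟨1, 1, -1, -1, 1, 1, 0, 0⟩,
  ⟨0, 0, 0, -1, 1, 0, -1, -1⟩,
  ⟨0, 0, 0, 1, -1, 0, 1, 1⟩,
  ⟨-1, 0, 0, 0, 0, 1, 0, -1⟩,
  ⟨0, -1, -1, 0, 0, 0, -1, 0⟩,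
  ⟨-1, -1, 1, 1, -1, -1, 0, 0⟩,
  ⟨-1, 0, 0, 0, -1, 0, 1, 1⟩,
  ⟨0, 0, 0, -1, 0, 1, 0, -1⟩,
  ⟨1, 1, -1, -1, 0, 0, -1, 0⟩,
  ⟨0, -1, -1, 0, -1, -1, 0, 0⟩,
  ⟨-1, 0, 0, 0, 0, 0, -1, 0⟩,
  ⟨0, 0, 0, -1, -1, -1, 0, 0⟩]

def ER : List EM := EL.filter fun x => decide (x ≠ EM.one) && x.ev 1 0

def conjE (x y : EM) : EM := ((y.mul y).mul x).mul y

def srch : ℕ → EM → EM → EM → Bool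
  | 0, x, y, z => decide (x = y) || decide (y = z)
  | n + 1, x, y, z => decide (x = y) || decide (y = z) ||
      srch n y (conjE x y) z || srch n x z (conjE y z)

theorem EL_mul : ∀ x ∈ EL, ∀ y ∈ EL, x.mul y ∈ EL := by decide +kernel

theorem EL_inv : ∀ x ∈ EL, ∃ y ∈ EL, x.mul y = EM.one := by decide +kernel

theorem ER_cube : ∀ x ∈ ER, (x.mul x).mul x = EM.one := by decide +kernel

theorem ER_conj : ∀ x ∈ ER, ∀ y ∈ ER, conjE x y ∈ ER := by decide +kernel

theorem ER_srch : ∀ x ∈ ER, ∀ y ∈ ER, ∀ z ∈ ER,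
    (((x.mul y).mul z).ev 0 (-1) || ((x.mul y).mul z).ev 1 1) = true → srch 2 x y z = true := by
  decide +kernel

theorem om_prim : IsPrimitiveRoot ω 3 := by
  have := Complex.isPrimitiveRoot_exp 3 (by norm_num)
  simpa [ω] using this

theorem om_sq : ω ^ 2 = -1 - ω := by
  have h := om_prim.geom_sum_eq_zero (by norm_num)
  simp [Finset.sum_range_succ] at h
  linear_combination h

theorem om_lin (k l : ℤ) (h : (k : ℂ) + l * ω = 0) : k = 0 ∧ l = 0 := by
  have h2 : ((k * k - k * l + l * l : ℤ) : ℂ) = 0 := by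
    push_cast
    linear_combination (k - l - l * ω) * h + (l : ℂ) ^ 2 * om_sq
  have h3 : k * k - k * l + l * l = 0 := by exact_mod_cast h2
  constructor <;> nlinarith [sq_nonneg (k - l), sq_nonneg (k + l), sq_nonneg k, sq_nonneg l]

def toC (x : EM) : Matrix (Fin 2) (Fin 2) ℂ :=
  !![x.a + x.a' * ω, x.b + x.b' * ω; x.c + x.c' * ω, x.d + x.d' * ω]

theorem toC_mul (x y : EM) : toC (x.mul y) = toC x * toC y := by
  have h := om_sq
  ext i j
  fin_cases i <;> fin_cases j <;> simp [toC, EM.mul, Matrix.mul_apply, Fin.sum_univ_two]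
  · linear_combination (-(x.a' : ℂ) * y.a' - x.b' * y.c') * h
  · linear_combination (-(x.a' : ℂ) * y.b' - x.b' * y.d') * h
  · linear_combination (-(x.c' : ℂ) * y.a' - x.d' * y.c') * h
  · linear_combination (-(x.c' : ℂ) * y.b' - x.d' * y.d') * h

theorem toC_one : toC EM.one = 1 := by
  ext i j
  fin_cases i <;> fin_cases j <;> simp [toC, EM.one]

def PM : Matrix (Fin 2) (Fin 2) ℂ := !![0, -ω; 1, (-2 - ω) / 3]

theorem om_ne : ω ≠ 0 := om_prim.ne_zero (by norm_num)

theorem PM_det : PM.det = ω := by simp [PM, Matrix.det_fin_two]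

theorem PM_unit : IsUnit PM.det := by rw [PM_det]; exact isUnit_iff_ne_zero.2 om_ne

/-- `x` models the matrix `m`. -/
def Rl (m : Matrix (Fin 2) (Fin 2) ℂ) (x : EM) : Prop := m * PM = PM * toC x

theorem Rl_cancel {m n : Matrix (Fin 2) (Fin 2) ℂ} (h : m * PM = n * PM) : m = n := by
  have := congrArg (· * PM⁻¹) h
  simpa [Matrix.mul_assoc, Matrix.mul_nonsing_inv _ PM_unit] using this

theorem Rl_inj {m n : Matrix (Fin 2) (Fin 2) ℂ} {x : EM} (h : Rl m x) (h' : Rl n x) : m = n :=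
  Rl_cancel (h.trans h'.symm)

theorem Rl_mul {m n : Matrix (Fin 2) (Fin 2) ℂ} {x y : EM} (h : Rl m x) (h' : Rl n y) :
    Rl (m * n) (x.mul y) := by
  unfold Rl at *
  rw [toC_mul, Matrix.mul_assoc, h', ← Matrix.mul_assoc, h, Matrix.mul_assoc]

theorem Rl_one : Rl 1 EM.one := by simp [Rl, toC_one]

theorem Rl_det {m : Matrix (Fin 2) (Fin 2) ℂ} {x : EM} (h : Rl m x) (k l : ℤ)
    (hd : (m - ((k : ℂ) + l * ω) • (1 : Matrix (Fin 2) (Fin 2) ℂ)).det = 0) :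
    x.ev k l = true := by
  have h1 : (m - ((k : ℂ) + l * ω) • (1 : Matrix (Fin 2) (Fin 2) ℂ)) * PM
      = PM * (toC x - ((k : ℂ) + l * ω) • (1 : Matrix (Fin 2) (Fin 2) ℂ)) := by
    rw [Matrix.sub_mul, Matrix.mul_sub, h]; simp
  have h2 := congrArg Matrix.det h1
  rw [Matrix.det_mul, Matrix.det_mul, hd, zero_mul, PM_det] at h2
  have h3 := (mul_eq_zero.1 h2.symm).resolve_left om_ne
  rw [Matrix.det_fin_two] at h3
  simp [toC] at h3
  have h4 := om_lin _ _ (show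
    (((x.a - k) * (x.d - k) - (x.a' - l) * (x.d' - l) - (x.b * x.c - x.b' * x.c') : ℤ) : ℂ)
    + (((x.a - k) * (x.d' - l) + (x.a' - l) * (x.d - k) - (x.a' - l) * (x.d' - l)
    - (x.b * x.c' + x.b' * x.c - x.b' * x.c') : ℤ) : ℂ) * ω = 0 by
      push_cast
      linear_combination h3 - (((x.a' : ℂ) - l) * (x.d' - l) - x.b' * x.c') * om_sq)
  simp [EM.ev, h4.1, h4.2]

theorem Rl_A : Rl AMat ⟨0, 1, 1, 0, 0, 0, 1, 0⟩ := by
  have h := om_sq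
  ext i j
  fin_cases i <;> fin_cases j <;>
    simp [AMat, PM, toC, Matrix.mul_apply, Fin.sum_univ_two]
  linear_combination (-1 / 3) * h

theorem Rl_B : Rl BMat ⟨1, 0, 0, 0, 0, -1, 0, 1⟩ := by
  have h := om_sq
  ext i j
  fin_cases i <;> fin_cases j <;>
    simp [BMat, PM, toC, Matrix.mul_apply, Fin.sum_univ_two]
  all_goals grind

theorem G4_model (g : G4) : ∃ x ∈ EL, Rl (mat g) x := by
  obtain ⟨g, hg⟩ := g
  change ∃ x ∈ EL, Rl (g : Matrix (Fin 2) (Fin 2) ℂ) x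
  unfold G4 at hg
  induction hg using Subgroup.closure_induction with
  | mem g hg =>
    rcases hg with hg | hg
    · exact ⟨_, by decide, hg ▸ Rl_A⟩
    · exact ⟨_, by decide, hg ▸ Rl_B⟩
  | one => exact ⟨EM.one, by decide, by simpa using Rl_one⟩
  | mul g h _ _ ih1 ih2 =>
    obtain ⟨x, hx, h1⟩ := ih1
    obtain ⟨y, hy, h2⟩ := ih2
    exact ⟨_, EL_mul x hx y hy, by simpa using Rl_mul h1 h2⟩
  | inv g _ ih =>
    obtain ⟨x, hx, h1⟩ := ih
    obtain ⟨y, hy, h2⟩ := EL_inv x hx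
    refine ⟨y, hy, ?_⟩
    have e : toC x * toC y = 1 := by rw [← toC_mul, h2, toC_one]
    have e1 : (g : Matrix (Fin 2) (Fin 2) ℂ) * (PM * toC y) = PM := by
      rw [← Matrix.mul_assoc, h1, Matrix.mul_assoc, e, Matrix.mul_one]
    have e2 : ((g⁻¹ : GL (Fin 2) ℂ) : Matrix (Fin 2) (Fin 2) ℂ) * g = 1 := by
      rw [← Units.val_mul]; simp
    calc ((g⁻¹ : GL (Fin 2) ℂ) : Matrix (Fin 2) (Fin 2) ℂ) * PM
        = (g⁻¹ : GL (Fin 2) ℂ) * ((g : Matrix (Fin 2) (Fin 2) ℂ) * (PM * toC y)) := by rw [e1]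
      _ = PM * toC y := by rw [← Matrix.mul_assoc, e2, Matrix.one_mul]

theorem mat_inj {g h : G4} (e : mat g = mat h) : g = h := Subtype.ext (Units.ext e)

theorem mat_mul (g h : G4) : mat (g * h) = mat g * mat h := by simp [mat]

theorem mat_one : mat 1 = 1 := by simp [mat]

theorem refl_model (g : G4) (hg : IsReflection g) : ∃ x ∈ ER, Rl (mat g) x := by
  obtain ⟨x, hx, h⟩ := G4_model g
  refine ⟨x, ?_, h⟩
  rw [ER, List.mem_filter]
  refine ⟨hx, ?_⟩
  have h1 : x ≠ EM.one := by
    rintro rfl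
    exact hg.1 (mat_inj (by rw [mat_one]; exact Rl_inj h Rl_one))
  have h2 := Rl_det h 1 0 (by simpa using hg.2)
  simp [h1, h2]

theorem conj_model {g h : G4} {x y : EM} (hy : y ∈ ER) (hg : Rl (mat g) x)
    (hh : Rl (mat h) y) : Rl (mat (h⁻¹ * g * h)) (conjE x y) := by
  have h3 : h * h * h = 1 := mat_inj (by
    rw [mat_one, mat_mul, mat_mul]
    have := Rl_mul (Rl_mul hh hh) hh
    rw [ER_cube y hy] at this
    exact Rl_inj this Rl_one)
  have : h⁻¹ = h * h := by rw [inv_eq_iff_mul_eq_one, ← mul_assoc]; exact h3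
  rw [this, mat_mul, mat_mul, mat_mul]
  exact Rl_mul (Rl_mul (Rl_mul hh hh) hg) hh

theorem srch_sound (n : ℕ) : ∀ (x y z : EM), x ∈ ER → y ∈ ER → z ∈ ER → srch n x y z = true →
    ∀ t : Fin 3 → G4, Rl (mat (t 0)) x → Rl (mat (t 1)) y → Rl (mat (t 2)) z →
    ∃ s : Fin 3 → G4, SameHurwitzOrbit t s ∧ HasConsecutiveEqualPair s := by
  have base : ∀ (x y z : EM), (x = y ∨ y = z) →
    ∀ t : Fin 3 → G4, Rl (mat (t 0)) x → Rl (mat (t 1)) y → Rl (mat (t 2)) z →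
    ∃ s : Fin 3 → G4, SameHurwitzOrbit t s ∧ HasConsecutiveEqualPair s := by
    intro x y z h t h0 h1 h2
    refine ⟨t, Relation.EqvGen.refl _, ?_⟩
    rcases h with rfl | rfl
    · exact ⟨0, by norm_num, mat_inj (Rl_inj h0 h1)⟩
    · exact ⟨1, by norm_num, mat_inj (Rl_inj h1 h2)⟩
  induction n with
  | zero =>
    intro x y z hx hy hz h
    exact base x y z (by simpa [srch] using h)
  | succ n ih =>
    intro x y z hx hy hz h t h0 h1 h2
    simp only [srch, Bool.or_eq_true, decide_eq_true_eq] at h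
    rcases h with (h | h) | h
    · exact base x y z h t h0 h1 h2
    · obtain ⟨s, hs, hs'⟩ := ih _ _ _ hy (ER_conj x hx y hy) hz h
        ![t 1, (t 1)⁻¹ * t 0 * t 1, t 2] h1 (conj_model hy h0 h1) h2
      refine ⟨s, Relation.EqvGen.trans _ _ _ (Relation.EqvGen.rel _ _ ?_) hs, hs'⟩
      refine ⟨0, by norm_num, rfl, rfl, ?_⟩
      intro j hj hj'
      fin_cases j <;> simp_all
    · obtain ⟨s, hs, hs'⟩ := ih _ _ _ hx hz (ER_conj y hy z hz) h
        ![t 0, t 2, (t 2)⁻¹ * t 1 * t 2] h0 h2 (conj_model hz h1 h2)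
      refine ⟨s, Relation.EqvGen.trans _ _ _ (Relation.EqvGen.rel _ _ ?_) hs, hs'⟩
      refine ⟨1, by norm_num, rfl, rfl, ?_⟩
      intro j hj hj'
      fin_cases j <;> simp_all

theorem prim6 (ζ : ℂ) (h : IsPrimitiveRoot ζ 6) : ζ = -ω ∨ ζ = 1 + ω := by
  have h6 := h.pow_eq_one
  have h3 : ζ ^ 3 ≠ 1 := h.pow_ne_one_of_pos_of_lt (by norm_num) (by norm_num)
  have h2 : ζ ^ 2 ≠ 1 := h.pow_ne_one_of_pos_of_lt (by norm_num) (by norm_num)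
  have e : (ζ ^ 3 - 1) * (ζ ^ 3 + 1) = 0 := by linear_combination h6
  have e1 := (mul_eq_zero.1 e).resolve_left (sub_ne_zero.2 h3)
  have e2 : (ζ + 1) * ((ζ + ω) * (ζ - (1 + ω))) = 0 := by
    linear_combination e1 - (ζ + 1) * om_sq
  rcases mul_eq_zero.1 e2 with e3 | e3
  · exact absurd (by linear_combination (ζ - 1) * e3) h2
  · rcases mul_eq_zero.1 e3 with e4 | e4
    · left; linear_combination e4
    · right; linear_combination e4

theorem g4_length_three_pair (c : G4) (hc : IsCoxeter c) (t : Fin 3 → G4)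
    (ht : ∀ i, IsReflection (t i)) (hp : (List.ofFn t).prod = c) :
    ∃ s : Fin 3 → G4, SameHurwitzOrbit t s ∧ HasConsecutiveEqualPair s := by
  obtain ⟨x, hx, h0⟩ := refl_model _ (ht 0)
  obtain ⟨y, hy, h1⟩ := refl_model _ (ht 1)
  obtain ⟨z, hz, h2⟩ := refl_model _ (ht 2)
  refine srch_sound 2 x y z hx hy hz (ER_srch x hx y hy z hz ?_) t h0 h1 h2
  have hpc : t 0 * t 1 * t 2 = c := by
    rw [← hp]; simp [List.ofFn_succ, mul_assoc]
  have hm : Rl (mat c) ((x.mul y).mul z) := by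
    rw [← hpc, mat_mul, mat_mul]; exact Rl_mul (Rl_mul h0 h1) h2
  obtain ⟨ζ, hζ, hd⟩ := hc
  rw [Bool.or_eq_true]
  rcases prim6 ζ hζ with rfl | rfl
  · left; exact Rl_det hm 0 (-1) (by simpa using hd)
  · right; exact Rl_det hm 1 1 (by simpa using hd)
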